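/- arXiv:2503.10402 — 11 statements merged into one kernel-verified Lean document; each statement's English description precedes it below -/
import Mathlib

section
/- Let f : ℝ → ℝ be twice continuously differentiable, let x* be a simple root of f (i.e. f(x*) = 0 and f'(x*) ≠ 0), and let g : ℝ → ℝ be continuously differentiable with g(0) = 0 and g'(0) ≠ 0. Then there exists δ > 0 such that for every x with 0 < |x − x*| < δ one has f(x) ≠ 0, g(f(x)) ≠ 0, and the divided-difference derivative estimate h(x) = (f(x + g(f(x))) − f(x)) / g(f(x)) is nonzero; in particular the modified Steffensen iteration map v(x) = x − f(x)/h(x) is well defined on the punctured ball 0 < |x − x*| < δ. -/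
open Filter Topology

open Filter Topology

theorem exists_left_inv_aux (f : ℝ → ℝ) (hf : ContDiff ℝ 1 f) (a : ℝ) (h : deriv f a ≠ 0) :
    ∃ L : ℝ → ℝ, ∀ᶠ x in 𝓝 a, L (f x) = x := by
  have h1 : HasStrictDerivAt f (deriv f a) a :=
    hf.contDiffAt.hasStrictDerivAt (by norm_num)
  have h2 := h1.hasStrictFDerivAt_equiv h
  exact ⟨_, h2.eventually_left_inverse⟩

/-- Near a simple root, the modified Steffensen divided-difference estimate
`h(x) = (f (x + g (f x)) - f x) / g (f x)` is well defined: on a punctured ball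
around the root, `f x ≠ 0`, `g (f x) ≠ 0` and `h x ≠ 0`, so the iteration map
`v(x) = x - f x / h x` is well defined. -/
theorem modified_steffensen_well_defined
    (f : ℝ → ℝ) (hf : ContDiff ℝ 2 f) (xs : ℝ)
    (hroot : f xs = 0) (hf' : deriv f xs ≠ 0)
    (g : ℝ → ℝ) (hg : ContDiff ℝ 1 g) (hg0 : g 0 = 0) (hg' : deriv g 0 ≠ 0) :
    ∃ δ > 0, ∀ x : ℝ, 0 < |x - xs| → |x - xs| < δ →
      f x ≠ 0 ∧ g (f x) ≠ 0 ∧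
        (f (x + g (f x)) - f x) / g (f x) ≠ 0 := by
  obtain ⟨L, hL⟩ := exists_left_inv_aux f (hf.of_le (by norm_num)) xs hf'
  obtain ⟨M, hM⟩ := exists_left_inv_aux g hg 0 hg'
  have hfc : Tendsto f (𝓝 xs) (𝓝 0) := by
    simpa [hroot] using hf.continuous.tendsto xs
  have hgc : Tendsto (fun x => x + g (f x)) (𝓝 xs) (𝓝 xs) := by
    have : Continuous (fun x => x + g (f x)) :=
      continuous_id.add (hg.continuous.comp hf.continuous)
    simpa [hroot, hg0] using this.tendsto xs
  have hLs := hL.self_of_nhds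
  have hMs := hM.self_of_nhds
  have hev := hL.and ((hfc.eventually hM).and (hgc.eventually hL))
  obtain ⟨δ, hδ, H⟩ := Metric.eventually_nhds_iff.1 hev
  refine ⟨δ, hδ, fun x hx0 hxδ => ?_⟩
  obtain ⟨h1, h2, h3⟩ := H (y := x) (by rwa [Real.dist_eq])
  have hne : x ≠ xs := sub_ne_zero.1 (abs_pos.1 hx0)
  have hfx : f x ≠ 0 := by
    intro h
    apply hne
    rw [← h1, h, ← hroot, hLs]
  have hgx : g (f x) ≠ 0 := by
    intro h
    apply hfx
    rw [hg0] at hMs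
    rw [← h2, h, hMs]
  refine ⟨hfx, hgx, div_ne_zero (fun h => hgx ?_) hgx⟩
  rw [sub_eq_zero.1 h, h1] at h3
  linarith
end

section
/- Let f : ℝ → ℝ be twice continuously differentiable, let x* be a simple root of f (i.e. f(x*) = 0 and f'(x*) ≠ 0), and let g : ℝ → ℝ be continuously differentiable with g(0) = 0 and g'(0) ≠ 0. Then the divided-difference derivative estimate h(x) = (f(x + g(f(x))) − f(x)) / g(f(x)) converges to the true derivative at the root: the limit of h(x) as x → x* through points x ≠ x* (where h is well defined) equals f'(x*). -/
open Filter Topology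

/-- Near a simple root, the divided-difference derivative estimate
`h(x) = (f (x + g (f x)) - f x) / g (f x)` converges to the true derivative
`f'(x*)` as `x → x*` through points `x ≠ x*`. -/
theorem modified_steffensen_derivative_estimate_tendsto
    (f : ℝ → ℝ) (hf : ContDiff ℝ 2 f) (xs : ℝ)
    (hroot : f xs = 0) (hf' : deriv f xs ≠ 0)
    (g : ℝ → ℝ) (hg : ContDiff ℝ 1 g) (hg0 : g 0 = 0) (hg' : deriv g 0 ≠ 0) :
    Tendsto (fun x : ℝ => (f (x + g (f x)) - f x) / g (f x))
      (𝓝[≠] xs) (𝓝 (deriv f xs)) := by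
  have hs : HasStrictDerivAt f (deriv f xs) xs :=
    hf.contDiffAt.hasStrictDerivAt (by norm_num)
  have hfd : HasDerivAt f (deriv f xs) xs := hs.hasDerivAt
  have hgd : HasDerivAt g (deriv g 0) (f xs) := by
    rw [hroot]
    exact (hg.differentiable (by norm_num) 0).hasDerivAt
  have hcomp : HasDerivAt (fun x => g (f x)) (deriv g 0 * deriv f xs) xs := hgd.comp xs hfd
  have hne : ∀ᶠ x in 𝓝[≠] xs, g (f x) ≠ 0 :=
    hcomp.eventually_ne (mul_ne_zero hg' hf')
  have hc : Continuous (fun x : ℝ => (x + g (f x), x)) := by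
    have h1 := hf.continuous
    have h2 := hg.continuous
    fun_prop
  have ht : Tendsto (fun x : ℝ => (x + g (f x), x)) (𝓝[≠] xs) (𝓝 (xs, xs)) := by
    have := hc.tendsto xs
    simp only [hroot, hg0, add_zero] at this
    exact this.mono_left nhdsWithin_le_nhds
  have ho := (hs.hasStrictFDerivAt.isLittleO.comp_tendsto ht).tendsto_div_nhds_zero
  have ho' := ho.add_const (deriv f xs)
  rw [zero_add] at ho'
  refine ho'.congr' ?_
  filter_upwards [hne] with x hx
  simp only [Function.comp, add_sub_cancel_left, ContinuousLinearMap.toSpanSingleton_apply,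
    smul_eq_mul]
  field_simp
  ring
end

section
/- Let f : ℝ → ℝ be twice continuously differentiable, let x* be a simple root of f (i.e. f(x*) = 0 and f'(x*) ≠ 0), and let g : ℝ → ℝ be continuously differentiable with g(0) = 0 and g'(0) ≠ 0. Then the modified Steffensen iteration map v(x) = x − f(x)/h(x), with h(x) = (f(x + g(f(x))) − f(x)) / g(f(x)), satisfies v(x) → x* as x → x* through points x ≠ x*; that is, x* is a fixed point of the continuous extension of v. -/
open Filter Topology

/-- Near a simple root `x*`, the modified Steffensen iteration map
`v(x) = x - f x / h x` with `h(x) = (f (x + g (f x)) - f x) / g (f x)`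
satisfies `v x → x*` as `x → x*` through points `x ≠ x*`. -/
theorem modified_steffensen_map_tendsto_root
    (f : ℝ → ℝ) (hf : ContDiff ℝ 2 f) (xs : ℝ)
    (hroot : f xs = 0) (hf' : deriv f xs ≠ 0)
    (g : ℝ → ℝ) (hg : ContDiff ℝ 1 g) (hg0 : g 0 = 0) (hg' : deriv g 0 ≠ 0) :
    Tendsto (fun x : ℝ =>
        x - f x / ((f (x + g (f x)) - f x) / g (f x)))
      (𝓝[≠] xs) (𝓝 xs) := by
  have hfs : HasStrictDerivAt f (deriv f xs) xs :=
    hf.contDiffAt.hasStrictDerivAt (by norm_num)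
  have hgs : HasStrictDerivAt g (deriv g 0) 0 :=
    hg.contDiffAt.hasStrictDerivAt (by norm_num)
  have hgf : HasDerivAt (fun x => g (f x)) (deriv g 0 * deriv f xs) xs := by
    have h1 : HasDerivAt g (deriv g 0) (f xs) := by rw [hroot]; exact hgs.hasDerivAt
    exact h1.comp xs hfs.hasDerivAt
  have hne : ∀ᶠ x in 𝓝[≠] xs, g (f x) ≠ 0 :=
    hgf.eventually_ne (mul_ne_zero hg' hf')
  have hid : Tendsto (fun x : ℝ => x) (𝓝[≠] xs) (𝓝 xs) := nhdsWithin_le_nhds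
  have hfc : Tendsto f (𝓝[≠] xs) (𝓝 0) := by
    have := hfs.hasDerivAt.continuousAt.tendsto.comp hid
    rwa [hroot] at this
  have hgc : Tendsto (fun x => g (f x)) (𝓝[≠] xs) (𝓝 0) := by
    have := hgs.hasDerivAt.continuousAt.tendsto.comp hfc
    rwa [hg0] at this
  have hadd : Tendsto (fun x => x + g (f x)) (𝓝[≠] xs) (𝓝 xs) := by
    simpa using hid.add hgc
  have hpair : Tendsto (fun x => (x + g (f x), x)) (𝓝[≠] xs) (𝓝 (xs, xs)) :=
    hadd.prodMk_nhds hid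
  have ho := (hfs.isLittleO.comp_tendsto hpair).tendsto_div_nhds_zero
  have hh : Tendsto (fun x => (f (x + g (f x)) - f x) / g (f x)) (𝓝[≠] xs)
      (𝓝 (deriv f xs)) := by
    have h2 := ho.add_const (deriv f xs)
    rw [zero_add] at h2
    refine h2.congr' ?_
    filter_upwards [hne] with x hx
    simp
    field_simp
    ring
  simpa using hid.sub (hfc.div hh hf')
end

section
/- Let f : ℝ → ℝ be twice continuously differentiable, let x* be a simple root of f (i.e. f(x*) = 0 and f'(x*) ≠ 0), and let g : ℝ → ℝ be continuously differentiable with g(0) = 0 and g'(0) ≠ 0. Then the modified Steffensen iteration map v(x) = x − f(x)/h(x), with h(x) = (f(x + g(f(x))) − f(x)) / g(f(x)), has vanishing first-order error at the root: the limit of (v(x) − x*)/(x − x*) as x → x* through points x ≠ x* equals 0. (This is the statement v'(x*) = 0 for the continuous extension of v.) -/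
open Filter Topology

/-- Near a simple root `x*`, the modified Steffensen iteration map
`v(x) = x - f x / h x` with `h(x) = (f (x + g (f x)) - f x) / g (f x)`
has vanishing first-order error at the root:
`(v x - x*) / (x - x*) → 0` as `x → x*` through points `x ≠ x*`,
i.e. `v'(x*) = 0` for the continuous extension of `v`. -/
theorem modified_steffensen_first_order_error_vanishes
    (f : ℝ → ℝ) (hf : ContDiff ℝ 2 f) (xs : ℝ)
    (hroot : f xs = 0) (hf' : deriv f xs ≠ 0)
    (g : ℝ → ℝ) (hg : ContDiff ℝ 1 g) (hg0 : g 0 = 0) (hg' : deriv g 0 ≠ 0) :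
    Tendsto (fun x : ℝ =>
        ((x - f x / ((f (x + g (f x)) - f x) / g (f x))) - xs) / (x - xs))
      (𝓝[≠] xs) (𝓝 0) := by
  have h1 : HasDerivAt f (deriv f xs) xs :=
    (hf.differentiable (by norm_num) xs).hasDerivAt
  have h2 : HasDerivAt g (deriv g 0) (f xs) := by
    rw [hroot]
    exact (hg.differentiable (by norm_num) 0).hasDerivAt
  generalize deriv f xs = a at *
  generalize deriv g 0 = b at *
  have h3 : HasDerivAt (fun x => g (f x)) (b * a) xs := h2.comp xs h1
  have h4 : HasDerivAt (fun x => x + g (f x)) (1 + b * a) xs := (hasDerivAt_id' xs).add h3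
  have h1' : HasDerivAt f a (xs + g (f xs)) := by simpa [hroot, hg0] using h1
  have h5 : HasDerivAt (fun x => f (x + g (f x))) (a * (1 + b * a)) xs :=
    HasDerivAt.comp xs h1' h4
  rw [hasDerivAt_iff_tendsto_slope] at h1 h3 h5
  have hba : b * a ≠ 0 := mul_ne_zero hg' hf'
  have e : (a * (1 + b * a) - a) / (b * a) = a := by
    field_simp
    ring
  have h6 := (h5.sub h1).div h3 hba
  rw [e] at h6
  have h7 := (h1.div h6 hf').const_sub 1
  rw [div_self hf', sub_self] at h7
  refine h7.congr' ?_
  filter_upwards [self_mem_nhdsWithin] with x hx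
  have hd : x - xs ≠ 0 := sub_ne_zero.mpr hx
  simp only [Pi.div_apply, Pi.sub_apply, slope_def_field, hroot, hg0, add_zero, sub_zero]
  rw [← sub_div, div_div_div_cancel_right₀ hd, sub_right_comm, sub_div (x - xs), div_self hd,
    div_right_comm]
end

section
/- Let f : ℝ → ℝ be twice continuously differentiable, let x* be a simple root of f (i.e. f(x*) = 0 and f'(x*) ≠ 0), and let g : ℝ → ℝ be continuously differentiable with g(0) = 0 and g'(0) ≠ 0. Then the modified Steffensen iteration map v(x) = x − f(x)/h(x), with h(x) = (f(x + g(f(x))) − f(x)) / g(f(x)), is locally quadratically accurate: there exist constants C > 0 and δ > 0 such that for all x with 0 < |x − x*| < δ, one has |v(x) − x*| ≤ C |x − x*|². -/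
open Filter Topology

/-- Near a simple root `x*`, the modified Steffensen iteration map
`v(x) = x - f x / h x` with `h(x) = (f (x + g (f x)) - f x) / g (f x)`
is locally quadratically accurate: `|v x - x*| ≤ C |x - x*|²` on a punctured
ball around `x*`. -/
theorem modified_steffensen_locally_quadratic
    (f : ℝ → ℝ) (hf : ContDiff ℝ 2 f) (xs : ℝ)
    (hroot : f xs = 0) (hf' : deriv f xs ≠ 0)
    (g : ℝ → ℝ) (hg : ContDiff ℝ 1 g) (hg0 : g 0 = 0) (hg' : deriv g 0 ≠ 0) :
    ∃ C > 0, ∃ δ > 0, ∀ x : ℝ, 0 < |x - xs| → |x - xs| < δ →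
      |(x - f x / ((f (x + g (f x)) - f x) / g (f x))) - xs| ≤
        C * |x - xs| ^ 2 := by
  have hfd : Differentiable ℝ f := hf.differentiable (by norm_num)
  have hgd : Differentiable ℝ g := hg.differentiable (by norm_num)
  have hdf : ContDiff ℝ 1 (deriv f) := by
    have h2 : ContDiff ℝ (1 + 1) f := by
      rw [one_add_one_eq_two]; exact hf
    exact (contDiff_succ_iff_deriv.1 h2).2.2
  obtain ⟨K, t, ht, hK⟩ := (hdf.contDiffAt (x := xs)).exists_lipschitzOnWith
  obtain ⟨r, hr, hrt⟩ := Metric.mem_nhds_iff.1 ht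
  have hgf : ContDiff ℝ 1 (fun x => g (f x)) := hg.comp (hf.of_le (by norm_num))
  obtain ⟨L, u, hu, hL⟩ := (hgf.contDiffAt (x := xs)).exists_lipschitzOnWith
  obtain ⟨r2, hr2, hru⟩ := Metric.mem_nhds_iff.1 hu
  have hder : HasDerivAt (fun x => g (f x)) (deriv g 0 * deriv f xs) xs := by
    have h1 : HasDerivAt g (deriv g 0) (f xs) := by
      rw [hroot]; exact (hgd 0).hasDerivAt
    exact h1.comp xs (hfd xs).hasDerivAt
  have hne := hder.eventually_ne (c := 0) (mul_ne_zero hg' hf')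
  rw [eventually_nhdsWithin_iff] at hne
  obtain ⟨r3, hr3, hne⟩ := Metric.eventually_nhds_iff.1 hne
  set m := deriv f xs with hm
  have hmpos : 0 < |m| := abs_pos.2 hf'
  have hK0 : (0:ℝ) ≤ K := K.2
  have hL0 : (0:ℝ) ≤ L := L.2
  have hL1 : (0:ℝ) < 1 + L := by linarith
  set M : ℝ := (K + 1) * (1 + L) with hM
  have hMpos : 0 < M := by positivity
  -- the key estimate
  have key : ∀ ρ, ρ < r → ∀ a b, |a - xs| ≤ ρ → |b - xs| ≤ ρ →
      |f b - f a - m * (b - a)| ≤ (K * ρ) * |b - a| := by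
    intro ρ hρ a b ha hb
    have := (convex_closedBall xs ρ).norm_image_sub_le_of_norm_hasDerivWithin_le
      (f := fun y => f y - m * y) (f' := fun y => deriv f y - m) (C := K * ρ)
      (x := a) (y := b) ?_ ?_ ?_ ?_
    · simp only [Real.norm_eq_abs] at this
      convert this using 2
      ring
    · intro y _
      have := ((hfd y).hasDerivAt.sub ((hasDerivAt_id y).const_mul m)).hasDerivWithinAt
        (s := Metric.closedBall xs ρ)
      rw [mul_one] at this
      exact this
    · intro y hy
      have hy' : dist y xs ≤ ρ := hy
      have h1 := hK.dist_le_mul y (hrt (lt_of_le_of_lt hy' hρ)) xs (hrt (Metric.mem_ball_self hr))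
      rw [Real.dist_eq] at h1
      exact h1.trans (mul_le_mul_of_nonneg_left hy' hK0)
    · simpa [Real.dist_eq] using ha
    · simpa [Real.dist_eq] using hb
  refine ⟨4 * M / |m|, by positivity,
    min (min r2 r3) (min (r / (1 + L)) (|m| / (2 * M))), by positivity, ?_⟩
  intro x hx0 hx
  simp only [lt_min_iff] at hx
  obtain ⟨⟨hx2, hx3⟩, hx1, hx4⟩ := hx
  rw [lt_div_iff₀ hL1] at hx1
  rw [lt_div_iff₀ (by positivity)] at hx4
  have hk0 : g (f x) ≠ 0 := hne (by rw [Real.dist_eq]; exact hx3)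
    (by intro h; simp only [Set.mem_singleton_iff] at h; simp [h] at hx0)
  have hkL : |g (f x)| ≤ L * |x - xs| := by
    have := hL.dist_le_mul x (hru (by simpa [Real.dist_eq] using hx2)) xs
      (hru (Metric.mem_ball_self hr2))
    simpa [Real.dist_eq, hroot, hg0] using this
  set k := g (f x) with hk
  set e := x - xs with he
  have hLe : 0 ≤ L * |e| := by positivity
  have hKle : K * (|e| * (1 + L)) ≤ M * |e| := by
    rw [hM]; nlinarith [mul_pos hx0 hL1]
  have A := key (|e| * (1 + L)) hx1 xs x (by simp; positivity) (by rw [← he]; nlinarith)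
  have B := key (|e| * (1 + L)) hx1 x (x + k) (by rw [← he]; nlinarith)
    (by
      have : x + k - xs = e + k := by rw [he]; ring
      rw [this]
      have := abs_add_le e k
      nlinarith)
  rw [hroot, sub_zero, ← he] at A
  rw [add_sub_cancel_left] at B
  set h := (f (x + k) - f x) / k with hh
  have hkpos : 0 < |k| := abs_pos.2 hk0
  have hhm : |h - m| ≤ M * |e| := by
    have h1 : f (x + k) - f x - m * k = (h - m) * k := by rw [hh]; field_simp
    rw [h1, abs_mul] at B
    exact (le_of_mul_le_mul_right B hkpos).trans hKle
  have hA : |f x - m * e| ≤ M * |e| * |e| :=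
    A.trans (mul_le_mul_of_nonneg_right hKle hx0.le)
  have hhlow : |m| / 2 ≤ |h| := by
    have h1 := abs_sub_abs_le_abs_sub m h
    rw [abs_sub_comm m h] at h1
    nlinarith
  have hhpos : 0 < |h| := by linarith
  have hh0 : h ≠ 0 := abs_pos.1 hhpos
  have h3 : x - f x / h - xs = (e * (h - m) - (f x - m * e)) / h := by
    rw [he]; field_simp; ring
  have h4 : |e * (h - m) - (f x - m * e)| ≤ 2 * M * |e| ^ 2 := by
    have h5 := abs_sub (e * (h - m)) (f x - m * e)
    rw [abs_mul] at h5
    nlinarith [mul_le_mul_of_nonneg_left hhm hx0.le]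
  rw [h3, abs_div, div_le_iff₀ hhpos]
  refine h4.trans ?_
  have h6 : 2 * M * |e| ^ 2 = 4 * M / |m| * |e| ^ 2 * (|m| / 2) := by field_simp; norm_num
  rw [h6]
  exact mul_le_mul_of_nonneg_left hhlow (by positivity)
end

section
/- Let f : ℝ → ℝ be twice continuously differentiable, let x* be a simple root of f (i.e. f(x*) = 0 and f'(x*) ≠ 0), and let g : ℝ → ℝ be continuously differentiable with g(0) = 0 and g'(0) ≠ 0. Then the second-order error coefficient of the modified Steffensen iteration map v(x) = x − f(x)/h(x), with h(x) = (f(x + g(f(x))) − f(x)) / g(f(x)), is given by: the limit of (v(x) − x*)/(x − x*)² as x → x* through points x ≠ x* equals f''(x*)·(1 + g'(0)·f'(x*)) / (2·f'(x*)); in particular the error recurrence e_{k+1} = (1/2)·v''(x*)·e_k² + O(e_k³) holds for the error e_k = x_k − x* of the iteration x_{k+1} = v(x_k). -/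
open Filter Topology

/-- The second-order error coefficient of the modified Steffensen iteration
map `v(x) = x - f x / h x`, `h(x) = (f (x + g (f x)) - f x) / g (f x)`:
`(v x - x*) / (x - x*)² → f''(x*) (1 + g'(0) f'(x*)) / (2 f'(x*))`
as `x → x*` through points `x ≠ x*`.  This is the coefficient `v''(x*)/2` in the
error recurrence `e_{k+1} = (1/2) v''(x*) e_k² + O(e_k³)`. -/
theorem modified_steffensen_second_order_error_coefficient
    (f : ℝ → ℝ) (hf : ContDiff ℝ 2 f) (xs : ℝ)
    (hroot : f xs = 0) (hf' : deriv f xs ≠ 0)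
    (g : ℝ → ℝ) (hg : ContDiff ℝ 1 g) (hg0 : g 0 = 0) (hg' : deriv g 0 ≠ 0) :
    Tendsto (fun x : ℝ =>
        ((x - f x / ((f (x + g (f x)) - f x) / g (f x))) - xs) / (x - xs) ^ 2)
      (𝓝[≠] xs)
      (𝓝 (deriv (deriv f) xs * (1 + deriv g 0 * deriv f xs) /
        (2 * deriv f xs))) := by
  have hd1 : Differentiable ℝ f := hf.differentiable (by norm_num)
  have hd2 : DifferentiableAt ℝ (deriv f) xs := by
    have h : ContDiff ℝ (1 + 1) f := by
      rw [one_add_one_eq_two]; exact hf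
    exact ((contDiff_succ_iff_deriv.1 h).2.2.differentiable (by norm_num)) xs
  have hgd : DifferentiableAt ℝ g (f xs) := hg.differentiable (by norm_num) _
  set a := deriv f xs with ha
  set c := deriv (deriv f) xs with hc
  set b := deriv g 0 with hb
  -- Peano remainder
  have hP : Tendsto (fun y => (f y - a * (y - xs)) / (y - xs) ^ 2) (𝓝[≠] xs) (𝓝 (c / 2)) := by
    apply HasDerivAt.lhopital_zero_nhdsNE (f' := fun y => deriv f y - a)
      (g' := fun y => 2 * (y - xs))
    · refine Eventually.of_forall fun y => ?_
      have := (hd1 y).hasDerivAt.sub (((hasDerivAt_id y).sub_const xs).const_mul a)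
      refine (HasDerivAt.congr_deriv this (by simp)).congr_of_eventuallyEq ?_
      exact Eventually.of_forall fun z => by simp
    · refine Eventually.of_forall fun y => ?_
      have := ((hasDerivAt_id y).sub_const xs).pow 2
      refine (HasDerivAt.congr_deriv this (by simp)).congr_of_eventuallyEq ?_
      exact Eventually.of_forall fun z => by simp
    · filter_upwards [self_mem_nhdsWithin] with y hy
      exact mul_ne_zero two_ne_zero (sub_ne_zero.2 hy)
    · have : ContinuousAt (fun y => f y - a * (y - xs)) xs := by
        have := hd1.continuous
        fun_prop
      have h := this.tendsto
      simp only [hroot, sub_self, mul_zero] at h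
      exact h.mono_left nhdsWithin_le_nhds
    · have : ContinuousAt (fun y : ℝ => (y - xs) ^ 2) xs := by fun_prop
      have h := this.tendsto
      norm_num at h
      exact h.mono_left nhdsWithin_le_nhds
    · have h := (hasDerivAt_iff_tendsto_slope.1 hd2.hasDerivAt).div_const 2
      refine h.congr fun y => ?_
      rw [slope_def_field, div_div, mul_comm]
  classical
  obtain ⟨R, hR, hRx, hRc⟩ : ∃ R : ℝ → ℝ, (∀ y, f y = a * (y - xs) + R y * (y - xs) ^ 2) ∧
      R xs = c / 2 ∧ Tendsto R (𝓝 xs) (𝓝 (c / 2)) := by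
    refine ⟨Function.update (fun y => (f y - a * (y - xs)) / (y - xs) ^ 2) xs (c / 2), ?_, ?_, ?_⟩
    · intro y
      by_cases hy : y = xs
      · subst hy; simp [hroot]
      · have : y - xs ≠ 0 := sub_ne_zero.2 hy
        rw [Function.update_of_ne hy]
        field_simp
        ring
    · simp
    · have := (continuousAt_update_same (f := fun y => (f y - a * (y - xs)) / (y - xs) ^ 2)
        (x := xs) (y := c / 2)).2 hP
      simpa [ContinuousAt] using this
  have hgf : HasDerivAt (fun x => g (f x)) (b * a) xs := by
    have h1 : HasDerivAt g b (f xs) := by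
      have := hgd.hasDerivAt
      rw [hroot] at this ⊢
      exact this
    exact h1.comp xs (hd1 xs).hasDerivAt
  have hm : b * a ≠ 0 := mul_ne_zero hg' hf'
  have hδ : Tendsto (fun x => g (f x) / (x - xs)) (𝓝[≠] xs) (𝓝 (b * a)) := by
    refine (hasDerivAt_iff_tendsto_slope.1 hgf).congr fun y => ?_
    rw [slope_def_field, hroot, hg0, sub_zero]
  have hxd : Tendsto (fun x => x + g (f x)) (𝓝[≠] xs) (𝓝 xs) := by
    have h := (continuousAt_id.add hgf.continuousAt).tendsto
    simp only [Pi.add_apply, id, hroot, hg0, add_zero] at h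
    exact h.mono_left nhdsWithin_le_nhds
  have hR1 := hRc.comp hxd
  have hR0 : Tendsto R (𝓝[≠] xs) (𝓝 (c / 2)) := hRc.mono_left nhdsWithin_le_nhds
  have he : Tendsto (fun x => x - xs) (𝓝[≠] xs) (𝓝 0) := by
    have : ContinuousAt (fun x : ℝ => x - xs) xs := by fun_prop
    have h := this.tendsto
    simp only [sub_self] at h
    exact h.mono_left nhdsWithin_le_nhds
  have hK := ((hR1.mul ((hδ.const_add 1).pow 2)).sub hR0).div hδ hm
  have hH := (he.mul hK).const_add a
  rw [zero_mul, add_zero] at hH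
  have hF := (hK.sub hR0).div hH hf'
  have hval : ((c / 2 * (1 + b * a) ^ 2 - c / 2) / (b * a) - c / 2) / a
      = c * (1 + b * a) / (2 * a) := by
    field_simp
    ring
  rw [hval] at hF
  refine hF.congr' ?_
  filter_upwards [self_mem_nhdsWithin, hδ.eventually_ne hm, hH.eventually_ne hf'] with x hx h1 h2
  have hx0 : x - xs ≠ 0 := sub_ne_zero.2 hx
  have hd0 : g (f x) ≠ 0 := fun h => h1 (by rw [h, zero_div])
  have e1 := hR (x + g (f x))
  have e2 := hR x
  simp only [Pi.div_apply, Pi.sub_apply, Pi.mul_apply, Pi.pow_apply, Function.comp] at h2 ⊢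
  set d := g (f x)
  set K := (R (x + d) * (1 + d / (x - xs)) ^ 2 - R x) / (d / (x - xs)) with hKd
  have hh : (f (x + d) - f x) / d = a + (x - xs) * K := by
    rw [e1, e2, hKd]
    field_simp
    ring
  rw [hh, e2]
  clear_value K d
  generalize hHH : a + (x - xs) * K = H at h2 ⊢
  rw [div_eq_div_iff h2 (pow_ne_zero 2 hx0)]
  have h3 : (x - (a * (x - xs) + R x * (x - xs) ^ 2) / H - xs) * H
      = (x - xs) * H - (a * (x - xs) + R x * (x - xs) ^ 2) := by
    rw [sub_right_comm, sub_mul, div_mul_cancel₀ _ h2]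
  rw [h3]
  linear_combination (x - xs) * hHH
end

section
/- Let f : ℝ → ℝ be twice continuously differentiable, let x* be a simple root of f (i.e. f(x*) = 0 and f'(x*) ≠ 0), and let g : ℝ → ℝ be continuously differentiable with g(0) = 0 and g'(0) ≠ 0. Let v be the modified Steffensen iteration map v(x) = x − f(x)/h(x) with h(x) = (f(x + g(f(x))) − f(x)) / g(f(x)), extended by v(x*) = x*. Then the iteration is locally convergent of order two: there exist δ > 0 and C > 0 such that for every initial point x₀ with |x₀ − x*| < δ, the sequence defined by x_{n+1} = v(x_n) is well defined, remains in the ball |x − x*| < δ, converges to x*, and satisfies |x_{n+1} − x*| ≤ C |x_n − x*|² for all n. -/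
open Filter Topology

lemma mvt_aux (f : ℝ → ℝ) (hf : Differentiable ℝ f) (c r x y : ℝ) (e : ℝ) (hx : |x - c| ≤ e)
    (hy : |y - c| ≤ e) :
    ∃ z, |z - c| ≤ e ∧ f y - f x = deriv f z * (y - x) := by
  rw [abs_le] at hx hy
  rcases lt_trichotomy x y with h | h | h
  · obtain ⟨z, hz, h2⟩ := exists_deriv_eq_slope f h hf.continuous.continuousOn hf.differentiableOn
    refine ⟨z, abs_le.2 ⟨by linarith [hz.1], by linarith [hz.2]⟩, ?_⟩
    rw [h2, div_mul_cancel₀ _ (sub_ne_zero.2 h.ne')]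
  · exact ⟨x, abs_le.2 hx, by subst h; simp⟩
  · obtain ⟨z, hz, h2⟩ := exists_deriv_eq_slope f h hf.continuous.continuousOn hf.differentiableOn
    refine ⟨z, abs_le.2 ⟨by linarith [hz.1], by linarith [hz.2]⟩, ?_⟩
    have : x - y ≠ 0 := sub_ne_zero.2 h.ne'
    rw [h2]; field_simp; ring

lemma step_aux
    (f : ℝ → ℝ) (hf : ContDiff ℝ 2 f) (xs : ℝ)
    (hroot : f xs = 0) (hf' : deriv f xs ≠ 0)
    (g : ℝ → ℝ) (hg : ContDiff ℝ 1 g) (hg0 : g 0 = 0) (hg' : deriv g 0 ≠ 0) :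
    ∃ C > 0, ∀ᶠ x in 𝓝 xs, x ≠ xs →
      |x - f x / ((f (x + g (f x)) - f x) / g (f x)) - xs| ≤ C * |x - xs| ^ 2 := by
  have hfd : Differentiable ℝ f := hf.differentiable (by norm_num)
  have hgd : Differentiable ℝ g := hg.differentiable (by norm_num)
  have hd1 : ContDiff ℝ 1 (deriv f) := by
    have : ContDiff ℝ (1 + 1) f := by simpa [one_add_one_eq_two] using hf
    exact (contDiff_succ_iff_deriv.1 this).2.2
  have hdd : Differentiable ℝ (deriv f) := hd1.differentiable (by norm_num)
  have hk : HasDerivAt (fun x => g (f x)) (deriv g 0 * deriv f xs) xs := by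
    have h1 : HasDerivAt g (deriv g 0) (f xs) := by rw [hroot]; exact (hgd 0).hasDerivAt
    exact h1.comp xs (hfd xs).hasDerivAt
  obtain ⟨K, hK0, hK⟩ := (hdd xs).hasDerivAt.isBigO_sub.exists_pos
  obtain ⟨M, hM0, hM⟩ := hk.isBigO_sub.exists_pos
  have hK := hK.bound
  have hM := hM.bound
  have hne := hk.eventually_ne (c := 0) (mul_ne_zero hg' hf')
  rw [eventually_nhdsWithin_iff] at hne
  have ha : 0 < |deriv f xs| := abs_pos.2 hf'
  have hlow : ∀ᶠ z in 𝓝 xs, |deriv f xs| / 2 < |deriv f z| :=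
    (hd1.continuous.abs.tendsto xs).eventually (lt_mem_nhds (by linarith))
  obtain ⟨r, hr, hball⟩ := Metric.eventually_nhds_iff.1 (hK.and hlow)
  have hsmall : ∀ᶠ x in 𝓝 xs, (1 + M) * |x - xs| < r := by
    have : Continuous fun x => (1 + M) * |x - xs| := by fun_prop
    refine (this.tendsto xs).eventually (gt_mem_nhds ?_)
    simpa using hr
  refine ⟨K * (2 + M) / (|deriv f xs| / 2), by positivity, ?_⟩
  filter_upwards [hM, hne, hsmall] with x hMx hnex hsx hx
  have hk0 := hnex hx
  simp only [hroot, hg0, sub_zero, Real.norm_eq_abs] at hMx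
  have hE : 0 ≤ |x - xs| := abs_nonneg _
  have hME : 0 ≤ M * |x - xs| := by positivity
  obtain ⟨z, hz, hz2⟩ := mvt_aux f hfd xs r xs x (|x - xs|) (by simp) le_rfl
  obtain ⟨w, hw, hw2⟩ := mvt_aux f hfd xs r x (x + g (f x)) ((1 + M) * |x - xs|) (by nlinarith)
    (by
      have := abs_add_le (x - xs) (g (f x))
      rw [show x + g (f x) - xs = x - xs + g (f x) by ring]; linarith)
  have hzb := (hball (y := z) (by rw [Real.dist_eq]; linarith)).1
  obtain ⟨hwb, hwl⟩ := hball (y := w) (by rw [Real.dist_eq]; linarith)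
  simp only [Real.norm_eq_abs] at hzb hwb
  have hw0 : deriv f w ≠ 0 := by
    intro h; rw [h, abs_zero] at hwl; linarith
  rw [hroot, sub_zero] at hz2
  have e1 : (f (x + g (f x)) - f x) / g (f x) = deriv f w := by
    rw [hw2, add_sub_cancel_left, mul_div_cancel_right₀ _ hk0]
  have e2 : x - f x / ((f (x + g (f x)) - f x) / g (f x)) - xs
      = (deriv f w - deriv f z) * (x - xs) / deriv f w := by
    rw [e1, hz2]; field_simp; ring
  rw [e2, abs_div, abs_mul]
  have hdiff : |deriv f w - deriv f z| ≤ K * (2 + M) * |x - xs| := by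
    have h1 := abs_sub_le (deriv f w) (deriv f xs) (deriv f z)
    rw [abs_sub_comm (deriv f xs)] at h1
    have h2 := mul_le_mul_of_nonneg_left hz hK0.le
    have h3 := mul_le_mul_of_nonneg_left hw hK0.le
    linarith
  calc |deriv f w - deriv f z| * |x - xs| / |deriv f w|
      ≤ (K * (2 + M) * |x - xs|) * |x - xs| / (|deriv f xs| / 2) := by gcongr
    _ = _ := by ring

/-- Local quadratic convergence of the modified Steffensen iteration:
with `v(x) = x - f x / h x`, `h(x) = (f (x + g (f x)) - f x) / g (f x)`,
extended by `v(x*) = x*`, there are `δ > 0` and `C > 0` such that every orbit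
starting in the ball `|x₀ - x*| < δ` stays in the ball, converges to `x*` and
satisfies `|x_{n+1} - x*| ≤ C |x_n - x*|²`. -/
theorem modified_steffensen_local_quadratic_convergence
    (f : ℝ → ℝ) (hf : ContDiff ℝ 2 f) (xs : ℝ)
    (hroot : f xs = 0) (hf' : deriv f xs ≠ 0)
    (g : ℝ → ℝ) (hg : ContDiff ℝ 1 g) (hg0 : g 0 = 0) (hg' : deriv g 0 ≠ 0) :
    ∃ δ > 0, ∃ C > 0, ∀ x₀ : ℝ, |x₀ - xs| < δ →
      ∀ seq : ℕ → ℝ, seq 0 = x₀ →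
        (∀ n : ℕ, seq (n + 1) =
          if seq n = xs then xs
          else seq n - f (seq n) /
            ((f (seq n + g (f (seq n))) - f (seq n)) / g (f (seq n)))) →
        (∀ n : ℕ, |seq n - xs| < δ) ∧
        Tendsto seq atTop (𝓝 xs) ∧
        (∀ n : ℕ, |seq (n + 1) - xs| ≤ C * |seq n - xs| ^ 2) := by
  obtain ⟨C, hC, hev⟩ := step_aux f hf xs hroot hf' g hg hg0 hg'
  obtain ⟨r, hr, hball⟩ := Metric.eventually_nhds_iff.1 hev
  refine ⟨min r (1 / (2 * C)), by positivity, C, hC, ?_⟩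
  intro x₀ hx₀ seq h0 hseq
  have hstep : ∀ n, |seq n - xs| < min r (1 / (2 * C)) →
      |seq (n + 1) - xs| ≤ C * |seq n - xs| ^ 2 := by
    intro n hn
    rw [hseq n]
    split_ifs with h
    · simp [h]
    · exact hball (by rw [Real.dist_eq]; exact lt_of_lt_of_le hn (min_le_left _ _)) h
  have hhalf : ∀ n, |seq n - xs| < min r (1 / (2 * C)) →
      |seq (n + 1) - xs| ≤ 1 / 2 * |seq n - xs| := by
    intro n hn
    refine (hstep n hn).trans ?_
    have h1 : |seq n - xs| ≤ 1 / (2 * C) := hn.le.trans (min_le_right _ _)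
    have h2 : C * |seq n - xs| ≤ 1 / 2 := by
      calc C * |seq n - xs| ≤ C * (1 / (2 * C)) := by gcongr
        _ = 1 / 2 := by field_simp
    nlinarith [abs_nonneg (seq n - xs)]
  have hin : ∀ n, |seq n - xs| < min r (1 / (2 * C)) := by
    intro n
    induction n with
    | zero => rw [h0]; exact hx₀
    | succ k ih => linarith [hhalf k ih, abs_nonneg (seq k - xs)]
  refine ⟨hin, ?_, fun n => hstep n (hin n)⟩
  have hgeo : ∀ n, |seq n - xs| ≤ (1 / 2 : ℝ) ^ n * |x₀ - xs| := by
    intro n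
    induction n with
    | zero => simp [h0]
    | succ k ih => rw [pow_succ]; linarith [hhalf k (hin k)]
  rw [tendsto_iff_dist_tendsto_zero]
  refine squeeze_zero (g := fun n => (1 / 2 : ℝ) ^ n * |x₀ - xs|) (fun _ => dist_nonneg)
    (fun n => by rw [Real.dist_eq]; exact hgeo n) ?_
  simpa using (tendsto_pow_atTop_nhds_zero_of_lt_one (r := (1 / 2 : ℝ))
    (by norm_num) (by norm_num)).mul_const |x₀ - xs|
end

section
/- Let f : ℝ → ℝ be twice continuously differentiable and let x* be a simple root of f (i.e. f(x*) = 0 and f'(x*) ≠ 0). Then the modified Steffensen iteration with g = tanh, i.e. v(x) = x − f(x)·g(f(x)) / (f(x + g(f(x))) − f(x)) with g = tanh, is locally quadratically accurate: there exist constants C > 0 and δ > 0 such that for all x with 0 < |x − x*| < δ the expression v(x) is well defined and |v(x) − x*| ≤ C |x − x*|². -/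
open Filter Topology

lemma steff_mvt (f : ℝ → ℝ) (hf : Differentiable ℝ f) (z R x y : ℝ)
    (hx : |x - z| ≤ R) (hy : |y - z| ≤ R) :
    ∃ c, |c - z| ≤ R ∧ f x - f y = deriv f c * (x - y) := by
  rw [abs_le] at hx hy
  rcases lt_trichotomy x y with h | h | h
  · obtain ⟨c, ⟨h1, h2⟩, h3⟩ := exists_deriv_eq_slope f h hf.continuous.continuousOn
      hf.differentiableOn
    refine ⟨c, abs_le.2 ⟨by linarith, by linarith⟩, ?_⟩
    have : y - x ≠ 0 := by linarith
    rw [h3]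
    field_simp
    ring
  · subst h
    exact ⟨x, abs_le.2 hx, by simp⟩
  · obtain ⟨c, ⟨h1, h2⟩, h3⟩ := exists_deriv_eq_slope f h hf.continuous.continuousOn
      hf.differentiableOn
    refine ⟨c, abs_le.2 ⟨by linarith, by linarith⟩, ?_⟩
    have : x - y ≠ 0 := by linarith
    rw [h3]
    field_simp

lemma steff_abs_tanh_le (u : ℝ) : |Real.tanh u| ≤ |u| := by
  obtain ⟨c, hc, h⟩ := steff_mvt Real.sinh Real.differentiable_sinh 0 |u| u 0 (by simp) (by simp)
  simp only [Real.deriv_sinh, Real.sinh_zero, sub_zero] at h hc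
  rw [Real.tanh_eq_sinh_div_cosh, abs_div, abs_of_pos (Real.cosh_pos u), div_le_iff₀ (Real.cosh_pos u),
    h, abs_mul, abs_of_pos (Real.cosh_pos c), mul_comm]
  exact mul_le_mul_of_nonneg_left (Real.cosh_le_cosh.2 hc) (abs_nonneg u)

/-- The modified Steffensen iteration with auxiliary function `g = tanh`,
`v(x) = x - f x * tanh (f x) / (f (x + tanh (f x)) - f x)`, is locally
quadratically accurate near a simple root `x*`: on a punctured ball around
`x*` it is well defined and `|v x - x*| ≤ C |x - x*|²`. -/
theorem tanh_steffensen_locally_quadratic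
    (f : ℝ → ℝ) (hf : ContDiff ℝ 2 f) (xs : ℝ)
    (hroot : f xs = 0) (hf' : deriv f xs ≠ 0) :
    ∃ C > 0, ∃ δ > 0, ∀ x : ℝ, 0 < |x - xs| → |x - xs| < δ →
      Real.tanh (f x) ≠ 0 ∧
      f (x + Real.tanh (f x)) - f x ≠ 0 ∧
      |(x - f x * Real.tanh (f x) / (f (x + Real.tanh (f x)) - f x)) - xs| ≤
        C * |x - xs| ^ 2 := by
  have hd : Differentiable ℝ f := hf.differentiable (by norm_num)
  have h1 : ContDiff ℝ 1 (deriv f) := by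
    have h2 : ContDiff ℝ (1 + 1) f := by
      rw [one_add_one_eq_two]; exact hf
    exact (contDiff_succ_iff_deriv.1 h2).2.2
  obtain ⟨K, s, hs, hK⟩ := (h1.contDiffAt (x := xs)).exists_lipschitzOnWith
  obtain ⟨r, hr, hrs⟩ := Metric.mem_nhds_iff.1 hs
  have hxs : xs ∈ s := hrs (Metric.mem_ball_self hr)
  have hLip : ∀ c, |c - xs| < r → |deriv f c - deriv f xs| ≤ (K : ℝ) * |c - xs| := by
    intro c hc
    have := hK.dist_le_mul c (hrs (by rwa [Metric.mem_ball, Real.dist_eq])) xs hxs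
    simpa [Real.dist_eq] using this
  have hK0 : (0 : ℝ) ≤ K := K.2
  generalize (K : ℝ) = k at hLip hK0
  generalize ha : deriv f xs = a at *
  have ha0 : 0 < |a| := abs_pos.2 hf'
  obtain ⟨L, hL⟩ : ∃ L, L = 1 + 3 / 2 * |a| := ⟨_, rfl⟩
  have hL1 : 1 < L := by rw [hL]; linarith
  have hL0 : 0 < L := by linarith
  refine ⟨4 * k * L / |a| + 1, by positivity, min (r / L) (|a| / (2 * (k + 1) * L)),
    lt_min (by positivity) (by positivity), ?_⟩
  intro x hx0 hx
  obtain ⟨hxr, hxa⟩ := lt_min_iff.1 hx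
  rw [lt_div_iff₀ hL0] at hxr
  rw [lt_div_iff₀ (by positivity)] at hxa
  generalize he : |x - xs| = e at *
  have hLe : e ≤ L * e := by nlinarith
  have key : ∀ c, |c - xs| ≤ L * e → |deriv f c - a| ≤ k * (L * e) ∧ |deriv f c - a| < |a| / 2 := by
    intro c hc
    have h := hLip c (by linarith)
    have h' := mul_le_mul_of_nonneg_left hc hK0
    have : 0 < L * e := by positivity
    exact ⟨by linarith, by linarith⟩
  have low : ∀ b : ℝ, |b - a| < |a| / 2 → |a| / 2 < |b| ∧ |b| ≤ 3 / 2 * |a| := by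
    intro b hb
    have e1 := abs_sub_abs_le_abs_sub a b
    have e2 := abs_sub_abs_le_abs_sub b a
    rw [abs_sub_comm] at e1
    exact ⟨by linarith, by linarith⟩
  obtain ⟨c1, hc1, hF⟩ := steff_mvt f hd xs e x xs he.le (by simpa using hx0.le)
  rw [hroot, sub_zero] at hF
  obtain ⟨k1, k1'⟩ := key c1 (by linarith)
  obtain ⟨l1, u1⟩ := low _ k1'
  have hxne : x - xs ≠ 0 := by
    intro h; rw [h, abs_zero] at he; linarith
  have hp1 : deriv f c1 ≠ 0 := abs_pos.1 (by linarith)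
  have hF0 : f x ≠ 0 := by rw [hF]; exact mul_ne_zero hp1 hxne
  have hFb : |f x| ≤ 3 / 2 * |a| * e := by
    rw [hF, abs_mul, he]; exact mul_le_mul_of_nonneg_right u1 hx0.le
  have ht0 : Real.tanh (f x) ≠ 0 := by
    rw [Real.tanh_eq_sinh_div_cosh]
    exact div_ne_zero (by simpa using hF0) (Real.cosh_pos _).ne'
  have htb := steff_abs_tanh_le (f x)
  generalize Real.tanh (f x) = t at *
  obtain ⟨c2, hc2, hD⟩ := steff_mvt f hd xs (L * e) (x + t) x (by
    have h := abs_add_le (x - xs) t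
    rw [show x + t - xs = x - xs + t by ring]
    rw [hL]; linarith) (by linarith)
  obtain ⟨k2, k2'⟩ := key c2 hc2
  obtain ⟨l2, u2⟩ := low _ k2'
  have hp2 : deriv f c2 ≠ 0 := abs_pos.1 (by linarith)
  rw [add_sub_cancel_left] at hD
  refine ⟨ht0, by rw [hD]; exact mul_ne_zero hp2 ht0, ?_⟩
  rw [hD, hF]
  have e1 : x - deriv f c1 * (x - xs) * t / (deriv f c2 * t) - xs
      = (x - xs) * (deriv f c2 - deriv f c1) / deriv f c2 := by
    field_simp
    ring
  rw [e1, abs_div, abs_mul, he, div_le_iff₀ (by linarith)]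
  have e2 : |deriv f c2 - deriv f c1| ≤ 2 * (k * (L * e)) := by
    have := abs_sub_le (deriv f c2) a (deriv f c1)
    rw [abs_sub_comm a] at this
    linarith
  calc e * |deriv f c2 - deriv f c1| ≤ e * (2 * (k * (L * e))) :=
        mul_le_mul_of_nonneg_left e2 hx0.le
    _ = (4 * k * L / |a|) * e ^ 2 * (|a| / 2) := by field_simp; ring
    _ ≤ (4 * k * L / |a| + 1) * e ^ 2 * |deriv f c2| := by
        gcongr
        linarith
end

section
/- Let f : ℝ → ℝ be twice continuously differentiable and let x* be a simple root of f (i.e. f(x*) = 0 and f'(x*) ≠ 0). Then the classical Steffensen iteration map v(x) = x − f(x)² / (f(x + f(x)) − f(x)) is locally quadratically accurate: there exist constants C > 0 and δ > 0 such that for all x with 0 < |x − x*| < δ, the denominator f(x + f(x)) − f(x) is nonzero and |v(x) − x*| ≤ C |x − x*|². -/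
open Filter Topology

lemma steff_aux (f : ℝ → ℝ) (hf : ContDiff ℝ 2 f) (xs : ℝ) :
    ∃ K > 0, ∃ r > 0, ∀ ρ < r, ∀ y z : ℝ, |y - xs| ≤ ρ → |z - xs| ≤ ρ →
      |f y - f z - deriv f xs * (y - z)| ≤ K * ρ * |y - z| := by
  have h1 : ContDiff ℝ 1 (deriv f) := by
    have : ContDiff ℝ (1 + 1) f := by simpa [one_add_one_eq_two] using hf
    exact (contDiff_succ_iff_deriv.1 this).2.2
  obtain ⟨K, t, ht, hK⟩ := (h1.contDiffAt (x := xs)).exists_lipschitzOnWith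
  obtain ⟨r, hr, hrt⟩ := Metric.mem_nhds_iff.1 ht
  have hd : Differentiable ℝ f := hf.differentiable (by norm_num)
  refine ⟨K + 1, by positivity, r, hr, ?_⟩
  intro ρ hρ y z hy hz
  have hρ0 : 0 ≤ ρ := (abs_nonneg _).trans hy
  have key := Convex.norm_image_sub_le_of_norm_hasDerivWithin_le
    (f := fun u => f u - deriv f xs * u) (f' := fun u => deriv f u - deriv f xs)
    (s := Metric.closedBall xs ρ) (C := (K + 1) * ρ) (x := z) (y := y)
    (fun u _ => by
      have := ((hd u).hasDerivAt.sub ((hasDerivAt_id u).const_mul (deriv f xs)))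
      rw [mul_one] at this
      exact this.hasDerivWithinAt)
    (fun u hu => by
      have hu' : |u - xs| ≤ ρ := by simpa [Real.dist_eq] using hu
      have := hK.dist_le_mul u (hrt (lt_of_le_of_lt hu hρ)) xs
        (hrt (Metric.mem_ball_self hr))
      rw [Real.dist_eq, Real.dist_eq] at this
      rw [Real.norm_eq_abs]
      have hK0 : (0 : ℝ) ≤ K := K.2
      nlinarith [mul_le_mul_of_nonneg_left hu' hK0])
    (convex_closedBall _ _)
    (by simpa [Real.dist_eq] using hz) (by simpa [Real.dist_eq] using hy)
  simp only [Real.norm_eq_abs] at key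
  convert key using 2
  ring

/-- The classical Steffensen iteration map
`v(x) = x - (f x)² / (f (x + f x) - f x)` is locally quadratically accurate
near a simple root `x*`: on a punctured ball around `x*` the denominator is
nonzero and `|v x - x*| ≤ C |x - x*|²`. -/
theorem classical_steffensen_locally_quadratic
    (f : ℝ → ℝ) (hf : ContDiff ℝ 2 f) (xs : ℝ)
    (hroot : f xs = 0) (hf' : deriv f xs ≠ 0) :
    ∃ C > 0, ∃ δ > 0, ∀ x : ℝ, 0 < |x - xs| → |x - xs| < δ →
      f (x + f x) - f x ≠ 0 ∧
      |(x - (f x) ^ 2 / (f (x + f x) - f x)) - xs| ≤ C * |x - xs| ^ 2 := by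
  obtain ⟨K, hK, r, hr, H⟩ := steff_aux f hf xs
  set a := deriv f xs with ha
  have ha0 : 0 < |a| := abs_pos.2 hf'
  obtain ⟨L, hL⟩ : ∃ L, L = 1 + |a| + K := ⟨_, rfl⟩
  have hL1 : 1 < L := by linarith
  have hL0 : 0 < L := by linarith
  refine ⟨4 * K * L / |a|, by positivity, min 1 (min (r / L) (|a| / (2 * K * L))),
    by positivity, ?_⟩
  intro x hx hxd
  obtain ⟨hd1, hd2, hd3⟩ : |x - xs| < 1 ∧ |x - xs| < r / L ∧ |x - xs| < |a| / (2 * K * L) := by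
    simpa [lt_min_iff] using hxd
  rw [lt_div_iff₀ hL0] at hd2
  rw [lt_div_iff₀ (by positivity)] at hd3
  have he : x - xs ≠ 0 := abs_pos.1 hx
  obtain ⟨d, hd⟩ : ∃ d, d = |x - xs| := ⟨_, rfl⟩
  have e1 := H d (by rw [hd]; nlinarith) x xs hd.ge (by simp [hd])
  rw [hroot, sub_zero] at e1
  -- f x = e (a + θ)
  obtain ⟨θ, hθ⟩ : ∃ θ, f x = (x - xs) * (a + θ) := ⟨f x / (x - xs) - a, by field_simp; ring⟩
  have hθb : |θ| ≤ K * d := by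
    have : f x - a * (x - xs) = θ * (x - xs) := by rw [hθ]; ring
    rw [this, abs_mul] at e1
    exact le_of_mul_le_mul_right e1 hx
  rw [← hd] at hx hd1 hd2 hd3 ⊢
  have hKd : K * d ≤ K * L * d := by nlinarith [mul_pos hK hx]
  have low : ∀ t, |t| ≤ K * L * d → |a| / 2 ≤ |a + t| := by
    intro t ht
    have := abs_sub_abs_le_abs_sub a (-t)
    rw [abs_neg, sub_neg_eq_add] at this
    linarith
  have haθ := low θ (hθb.trans hKd)
  have hfx : f x ≠ 0 := by
    rw [hθ]
    exact mul_ne_zero he (abs_pos.1 (by linarith))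
  have hfxb : |f x| ≤ (|a| + K) * d := by
    rw [hθ, abs_mul, ← hd]
    have h1 := abs_add_le a θ
    have h2 : |a + θ| ≤ |a| + K := by nlinarith
    nlinarith
  have e2 := H (L * d) (by linarith) (x + f x) x
    (by
      have : x + f x - xs = (x - xs) + f x := by ring
      rw [this]
      have := abs_add_le (x - xs) (f x)
      rw [← hd] at this
      rw [hL]; linarith)
    (by rw [← hd]; nlinarith)
  rw [add_sub_cancel_left] at e2
  obtain ⟨η, hη⟩ : ∃ η, f (x + f x) - f x = f x * (a + η) :=
    ⟨(f (x + f x) - f x) / f x - a, by field_simp; ring⟩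
  have hηb : |η| ≤ K * L * d := by
    have : f (x + f x) - f x - a * f x = η * f x := by rw [hη]; ring
    rw [this, abs_mul] at e2
    have := le_of_mul_le_mul_right e2 (abs_pos.2 hfx)
    linarith
  have haη := low η hηb
  have haη0 : a + η ≠ 0 := abs_pos.1 (by linarith)
  rw [hη]
  refine ⟨mul_ne_zero hfx haη0, ?_⟩
  have hv : x - f x ^ 2 / (f x * (a + η)) - xs = (x - xs) * (η - θ) / (a + η) := by
    have : f x ^ 2 / (f x * (a + η)) = f x / (a + η) := by field_simp
    rw [this, hθ]
    field_simp
    ring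
  rw [hv, abs_div, abs_mul, ← hd, div_le_iff₀ (by linarith)]
  have h3 : |η - θ| ≤ 2 * (K * L * d) := by
    have := abs_sub η θ
    linarith
  calc d * |η - θ| ≤ d * (2 * (K * L * d)) := by gcongr
    _ = 4 * K * L / |a| * d ^ 2 * (|a| / 2) := by field_simp; ring
    _ ≤ _ := by gcongr
end

section
/- Let f : ℝ → ℝ be twice continuously differentiable, let x* be a simple root of f (i.e. f(x*) = 0 and f'(x*) ≠ 0) with f''(x*) ≠ 0, and let g : ℝ → ℝ be continuously differentiable with g(0) = 0, g'(0) ≠ 0, and 1 + g'(0)·f'(x*) ≠ 0. Let v be the modified Steffensen iteration map v(x) = x − f(x)/h(x) with h(x) = (f(x + g(f(x))) − f(x)) / g(f(x)). Then the convergence is of exact order two: for every initial point x₀ ≠ x* sufficiently close to x*, the iterates x_{n+1} = v(x_n) satisfy x_n ≠ x* for all n and |x_{n+1} − x*| / |x_n − x*|² converges to the positive constant |f''(x*)·(1 + g'(0)·f'(x*))| / |2·f'(x*)|. -/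
open Filter Topology

lemma aux_taylor (f : ℝ → ℝ) (hf : ContDiff ℝ 2 f) (xs : ℝ) (hroot : f xs = 0) :
    Tendsto (fun x => (f x - deriv f xs * (x - xs)) / (x - xs) ^ 2) (𝓝[≠] xs)
      (𝓝 (deriv (deriv f) xs / 2)) := by
  have hd : Differentiable ℝ f := hf.differentiable (by norm_num)
  have hd2 : Differentiable ℝ (deriv f) :=
    (ContDiff.deriv' (n := 1) hf).differentiable (by norm_num)
  have hs := hasDerivAt_iff_tendsto_slope.1 (hd2 xs).hasDerivAt
  apply HasDerivAt.lhopital_zero_nhdsNE (f' := fun x => deriv f x - deriv f xs)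
    (g' := fun x => 2 * (x - xs))
  · refine Eventually.of_forall fun x => ?_
    have := (hd x).hasDerivAt.sub (((hasDerivAt_id x).sub_const xs).const_mul (deriv f xs))
    exact this.congr_deriv (by simp)
  · refine Eventually.of_forall fun x => ?_
    have := ((hasDerivAt_id x).sub_const xs).pow 2
    exact this.congr_deriv (by simp)
  · filter_upwards [self_mem_nhdsWithin] with x hx
    have : x - xs ≠ 0 := sub_ne_zero.2 hx
    positivity
  · apply tendsto_nhdsWithin_of_tendsto_nhds
    have : Continuous (fun x => f x - deriv f xs * (x - xs)) := by
      have := hd.continuous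
      fun_prop
    simpa [hroot] using this.tendsto xs
  · apply tendsto_nhdsWithin_of_tendsto_nhds
    have : Continuous (fun x : ℝ => (x - xs) ^ 2) := by fun_prop
    simpa using this.tendsto xs
  · refine (hs.div_const 2).congr fun x => ?_
    rw [slope_def_field, div_div, mul_comm]

lemma aux_v (f : ℝ → ℝ) (hf : ContDiff ℝ 2 f) (xs : ℝ)
    (hroot : f xs = 0) (hf' : deriv f xs ≠ 0)
    (g : ℝ → ℝ) (hg : ContDiff ℝ 1 g) (hg0 : g 0 = 0) (hg' : deriv g 0 ≠ 0)
    (hcoef : 1 + deriv g 0 * deriv f xs ≠ 0) :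
    Tendsto (fun x => (x - f x / ((f (x + g (f x)) - f x) / g (f x)) - xs) / (x - xs) ^ 2)
      (𝓝[≠] xs)
      (𝓝 (deriv (deriv f) xs * (1 + deriv g 0 * deriv f xs) / (2 * deriv f xs))) := by
  have ht := aux_taylor f hf xs hroot
  have hd : Differentiable ℝ f := hf.differentiable (by norm_num)
  have hgd : Differentiable ℝ g := hg.differentiable (by norm_num)
  set a := deriv f xs with ha
  set b := deriv (deriv f) xs with hb
  set c := deriv g 0 with hc
  set φ : ℝ → ℝ := fun x => (f x - a * (x - xs)) / (x - xs) ^ 2 with hφ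
  have hfφ : ∀ x, f x = a * (x - xs) + φ x * (x - xs) ^ 2 := by
    intro x
    by_cases hx : x = xs
    · subst hx; simp [hroot]
    · have : x - xs ≠ 0 := sub_ne_zero.2 hx
      simp only [hφ]
      field_simp
      ring
  have he : Tendsto (fun x => x - xs) (𝓝[≠] xs) (𝓝 0) := by
    apply tendsto_nhdsWithin_of_tendsto_nhds
    have : Continuous (fun x : ℝ => (x - xs)) := by fun_prop
    simpa using this.tendsto xs
  set r : ℝ → ℝ := fun x => g (f x) / (x - xs) with hr
  have hrt : Tendsto r (𝓝[≠] xs) (𝓝 (c * a)) := by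
    have h1 : HasDerivAt g c (f xs) := by rw [hroot]; exact (hgd 0).hasDerivAt
    have h2 := hasDerivAt_iff_tendsto_slope.1 (h1.comp xs (hd xs).hasDerivAt)
    refine h2.congr fun x => ?_
    simp [slope_def_field, hroot, hg0, hr]
  have hca : c * a ≠ 0 := mul_ne_zero hg' hf'
  have hy : Tendsto (fun x => x + g (f x)) (𝓝[≠] xs) (𝓝[≠] xs) := by
    apply tendsto_nhdsWithin_of_tendsto_nhds_of_eventually_within
    · apply tendsto_nhdsWithin_of_tendsto_nhds
      have : Continuous (fun x => x + g (f x)) := by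
        have := hd.continuous
        have := hgd.continuous
        fun_prop
      simpa [hroot, hg0] using this.tendsto xs
    · filter_upwards [self_mem_nhdsWithin, (hrt.const_add 1).eventually_ne hcoef] with x hx hx2 h
      apply hx2
      have : x - xs ≠ 0 := sub_ne_zero.2 hx
      have h' : x + g (f x) = xs := h
      simp only [hr]
      field_simp
      linarith
  have hφy := ht.comp hy
  set q : ℝ → ℝ := fun x => (φ (x + g (f x)) * (1 + r x) ^ 2 - φ x) / r x with hq
  have hqt : Tendsto q (𝓝[≠] xs) (𝓝 ((b / 2 * (1 + c * a) ^ 2 - b / 2) / (c * a))) :=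
    ((hφy.mul ((hrt.const_add 1).pow 2)).sub ht).div hrt hca
  have hH : Tendsto (fun x => a + (x - xs) * q x) (𝓝[≠] xs) (𝓝 a) := by
    simpa using (he.mul hqt).const_add a
  have hfin := (hqt.sub ht).div hH hf'
  have hval : ((b / 2 * (1 + c * a) ^ 2 - b / 2) / (c * a) - b / 2) / a
      = b * (1 + c * a) / (2 * a) := by
    field_simp
    ring
  rw [hval] at hfin
  refine hfin.congr' ?_
  filter_upwards [self_mem_nhdsWithin, hrt.eventually_ne hca, hH.eventually_ne hf']
    with x hx hrx hHx
  have hx0 : x - xs ≠ 0 := sub_ne_zero.2 hx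
  have hk : g (f x) = r x * (x - xs) := by simp only [hr]; field_simp
  have hh : (f (x + g (f x)) - f x) / g (f x) = a + (x - xs) * q x := by
    have h1 := hfφ (x + g (f x))
    have h2 := hfφ x
    have h3 : q x * r x = φ (x + g (f x)) * (1 + r x) ^ 2 - φ x := div_mul_cancel₀ _ hrx
    have hk0 : g (f x) ≠ 0 := by rw [hk]; exact mul_ne_zero hrx hx0
    rw [div_eq_iff hk0]
    linear_combination h1 - h2 - (x - xs) ^ 2 * h3 +
      (φ (x + g (f x)) * (2 * (x - xs) + g (f x) + r x * (x - xs)) - (x - xs) * q x) * hk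
  simp only [Pi.div_apply]
  rw [hh, hfφ x]
  generalize q x = Q at *
  generalize φ x = p at *
  rw [div_eq_div_iff hHx (pow_ne_zero 2 hx0)]
  have h := div_mul_cancel₀ (a * (x - xs) + p * (x - xs) ^ 2) hHx
  linear_combination h

/-- Exact second-order convergence of the modified Steffensen iteration
`x_{n+1} = v(x_n)`, `v(x) = x - f x / h x`,
`h(x) = (f (x + g (f x)) - f x) / g (f x)`: when `f''(x*) ≠ 0` and
`1 + g'(0) f'(x*) ≠ 0`, for every `x₀ ≠ x*` close enough to `x*` the iterates
never hit `x*` and `|x_{n+1} - x*| / |x_n - x*|²` converges to the positive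
constant `|f''(x*) (1 + g'(0) f'(x*))| / |2 f'(x*)|`. -/
theorem modified_steffensen_exact_order_two
    (f : ℝ → ℝ) (hf : ContDiff ℝ 2 f) (xs : ℝ)
    (hroot : f xs = 0) (hf' : deriv f xs ≠ 0)
    (hf'' : deriv (deriv f) xs ≠ 0)
    (g : ℝ → ℝ) (hg : ContDiff ℝ 1 g) (hg0 : g 0 = 0) (hg' : deriv g 0 ≠ 0)
    (hcoef : 1 + deriv g 0 * deriv f xs ≠ 0) :
    ∃ δ > 0, ∀ x₀ : ℝ, x₀ ≠ xs → |x₀ - xs| < δ →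
      ∀ seq : ℕ → ℝ, seq 0 = x₀ →
        (∀ n : ℕ, seq (n + 1) = seq n - f (seq n) /
          ((f (seq n + g (f (seq n))) - f (seq n)) / g (f (seq n)))) →
        (∀ n : ℕ, seq n ≠ xs) ∧
        Tendsto (fun n : ℕ => |seq (n + 1) - xs| / |seq n - xs| ^ 2) atTop
          (𝓝 (|deriv (deriv f) xs * (1 + deriv g 0 * deriv f xs)| /
            |2 * deriv f xs|)) := by
  have hv := aux_v f hf xs hroot hf' g hg hg0 hg' hcoef
  set L := deriv (deriv f) xs * (1 + deriv g 0 * deriv f xs) / (2 * deriv f xs) with hL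
  have hL0 : L ≠ 0 := div_ne_zero (mul_ne_zero hf'' hcoef) (mul_ne_zero two_ne_zero hf')
  have hLabs : |deriv (deriv f) xs * (1 + deriv g 0 * deriv f xs)| / |2 * deriv f xs| = |L| := by
    rw [hL, abs_div]
  rw [hLabs]
  set v : ℝ → ℝ := fun x => x - f x / ((f (x + g (f x)) - f x) / g (f x)) with hvdef
  have hv' : Tendsto (fun x => |v x - xs| / |x - xs| ^ 2) (𝓝[≠] xs) (𝓝 |L|) := by
    refine hv.abs.congr fun x => ?_
    rw [abs_div, abs_pow]
  have hLp : 0 < |L| := abs_pos.2 hL0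
  have hev := (hv'.eventually_lt_const (lt_add_one |L|)).and (hv'.eventually_const_lt hLp)
  rw [eventually_nhdsWithin_iff, Metric.eventually_nhds_iff] at hev
  obtain ⟨ε, hε, hev⟩ := hev
  refine ⟨min ε (1 / (2 * (|L| + 1))), by positivity, ?_⟩
  intro x₀ hx₀ hx₀δ seq h0 hseq
  have hseq' : ∀ n, seq (n + 1) = v (seq n) := hseq
  have step : ∀ x, x ≠ xs → |x - xs| < min ε (1 / (2 * (|L| + 1))) →
      v x ≠ xs ∧ |v x - xs| ≤ 1 / 2 * |x - xs| := by
    intro x hx hxd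
    have hpos : 0 < |x - xs| := abs_pos.2 (sub_ne_zero.2 hx)
    obtain ⟨h1, h2⟩ := hev (y := x) (by rw [Real.dist_eq]; exact hxd.trans_le (min_le_left _ _)) hx
    constructor
    · intro h
      simp [h] at h2
    · rw [div_lt_iff₀ (by positivity)] at h1
      have h3 := hxd.trans_le (min_le_right _ _)
      rw [lt_div_iff₀ (by positivity)] at h3
      nlinarith
  have key : ∀ n, seq n ≠ xs ∧ |seq n - xs| ≤ (1 / 2) ^ n * |x₀ - xs| := by
    intro n
    induction n with
    | zero => simp [h0, hx₀]
    | succ n ih =>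
      obtain ⟨h1, h2⟩ := ih
      have h3 : |seq n - xs| ≤ |x₀ - xs| := h2.trans
        (mul_le_of_le_one_left (abs_nonneg _) (pow_le_one₀ (by norm_num) (by norm_num)))
      obtain ⟨h4, h5⟩ := step (seq n) h1 (h3.trans_lt hx₀δ)
      rw [hseq' n]
      refine ⟨h4, h5.trans ?_⟩
      rw [pow_succ]
      linarith
  refine ⟨fun n => (key n).1, ?_⟩
  have hlim : Tendsto seq atTop (𝓝[≠] xs) := by
    apply tendsto_nhdsWithin_of_tendsto_nhds_of_eventually_within
    · rw [tendsto_iff_dist_tendsto_zero]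
      refine squeeze_zero (fun _ => dist_nonneg) (fun n => (key n).2) ?_
      have := (tendsto_pow_atTop_nhds_zero_of_lt_one (r := (1 / 2 : ℝ)) (by norm_num)
        (by norm_num)).mul_const |x₀ - xs|
      simpa using this
    · exact Eventually.of_forall fun n => (key n).1
  refine (hv'.comp hlim).congr fun n => ?_
  simp only [Function.comp, hseq' n]
end

section
/- Let k ≥ 1, let F : ℝᵏ → ℝ be continuously differentiable, let x̄* ∈ ℝᵏ satisfy F(x̄*) = 0, and let g : ℝ → ℝ be continuously differentiable with g(0) = 0 and g'(0) ≠ 0. For each index j define T_j(x̄) = (F(x̄ + g(F(x̄))·e_j) − F(x̄)) / g(F(x̄)), where e_j is the j-th standard basis vector. Then the vector (T_1(x̄), …, T_k(x̄)) converges to the gradient ∇F(x̄*) as x̄ → x̄* through points where F(x̄) ≠ 0 and g(F(x̄)) ≠ 0. -/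
open Filter Topology

/-- For a continuously differentiable scalar field `F : ℝᵏ → ℝ` with a root
`x̄*`, the vector of divided differences
`T_j(x̄) = (F (x̄ + g (F x̄) • e_j) - F x̄) / g (F x̄)` converges to the
gradient `∇F(x̄*)` as `x̄ → x̄*` through points where `F x̄ ≠ 0` and
`g (F x̄) ≠ 0`. -/
theorem modified_steffensen_gradient_estimate_tendsto
    (k : ℕ) (hk : 1 ≤ k)
    (F : EuclideanSpace ℝ (Fin k) → ℝ) (hF : ContDiff ℝ 1 F)
    (xs : EuclideanSpace ℝ (Fin k)) (hroot : F xs = 0)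
    (g : ℝ → ℝ) (hg : ContDiff ℝ 1 g) (hg0 : g 0 = 0) (hg' : deriv g 0 ≠ 0) :
    Tendsto (fun x : EuclideanSpace ℝ (Fin k) =>
        (WithLp.equiv 2 (Fin k → ℝ)).symm (fun j : Fin k =>
          (F (x + g (F x) • EuclideanSpace.single j 1) - F x) / g (F x)))
      (𝓝[{x : EuclideanSpace ℝ (Fin k) | F x ≠ 0 ∧ g (F x) ≠ 0}] xs)
      (𝓝 (gradient F xs)) := by
  have hcont : Continuous (fun x => g (F x)) := hg.continuous.comp hF.continuous
  have hS := (hF.contDiffAt (x := xs)).hasStrictFDerivAt one_ne_zero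
  have key : ∀ j : Fin k, Tendsto (fun x : EuclideanSpace ℝ (Fin k) =>
      (F (x + g (F x) • EuclideanSpace.single j 1) - F x) / g (F x))
      (𝓝[{x : EuclideanSpace ℝ (Fin k) | F x ≠ 0 ∧ g (F x) ≠ 0}] xs)
      (𝓝 (gradient F xs j)) := by
    intro j
    have hgr : gradient F xs j = fderiv ℝ F xs (EuclideanSpace.single j 1) := by
      rw [← inner_gradient_left]
      rw [EuclideanSpace.inner_single_right]; simp
    have ht : Tendsto (fun x : EuclideanSpace ℝ (Fin k) =>
        (x + g (F x) • (EuclideanSpace.single j 1 : EuclideanSpace ℝ (Fin k)), x))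
        (𝓝[{x : EuclideanSpace ℝ (Fin k) | F x ≠ 0 ∧ g (F x) ≠ 0}] xs) (𝓝 (xs, xs)) := by
      have hc : Continuous (fun x : EuclideanSpace ℝ (Fin k) =>
        (x + g (F x) • (EuclideanSpace.single j 1 : EuclideanSpace ℝ (Fin k)), x)) := by
        fun_prop
      have := (hc.tendsto xs).mono_left (nhdsWithin_le_nhds
        (s := {x : EuclideanSpace ℝ (Fin k) | F x ≠ 0 ∧ g (F x) ≠ 0}))
      simpa [hroot, hg0] using this
    have ho := hS.isLittleO.comp_tendsto ht
    have ho2 := ho.trans_isBigO (k := fun x => g (F x)) (by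
      refine Asymptotics.IsBigO.of_bound 1 (Eventually.of_forall fun x => ?_)
      simp [norm_smul])
    have h0 := ho2.tendsto_div_nhds_zero
    rw [hgr]
    have h1 := h0.add_const (fderiv ℝ F xs (EuclideanSpace.single j 1))
    rw [zero_add] at h1
    refine h1.congr' ?_
    filter_upwards [self_mem_nhdsWithin] with x hx
    have hx2 : g (F x) ≠ 0 := hx.2
    simp only [Function.comp, add_sub_cancel_left, map_smul, smul_eq_mul]
    field_simp
    ring
  exact ((PiLp.continuous_toLp 2 (fun _ : Fin k => ℝ)).tendsto _).comp (tendsto_pi_nhds.2 key)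
end
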